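/- Let G be a finite group, g ∈ G, η an irreducible character of C_G(g), m a positive integer, and r an integer coprime to exp(G). Define ν_m(g,η) := (1/|C_G(g)|) Σ_{x ∈ G, x^m = (gx)^m} η(x^m). Then ν_m(g^r, η) = ν_m(g, ψ^r η) = σ_r(ν_m(g,η)), where ψ^r η is the Adams operation (ψ^r η)(x) = η(x^r) and σ_r is the field automorphism of the cyclotomic field ℚ(ζ_{exp(G)}) sending roots of unity to their r-th powers. -/

import Mathlib

open scoped Classical
open CategoryTheory

/-!
Grouping the sum in `ν_m(g, η)` by the value `u = x ^ m` weights `η(u)` by the number of `x` with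
`x ^ m = u = (g x) ^ m`. The first equality follows, by the substitution `u ↦ u ^ r`, once this
number is known to be the same for `(g, u)` and `(g ^ r, u ^ r)`.

Dirichlet's theorem replaces `r` by a prime `p > |G|` with the same power map on `G`. The number
vanishes unless `g` commutes with `u`, and all `x` involved centralize `u`, so one may assume that
`u` is central. Then the sum of the `m`-th roots of `u` and that of the roots of `u⁻¹` are central
in `𝔽_p[G]`, and the number is, modulo `p`, the coefficient of their product at `g`. On the centre
of `𝔽_p[G]` the Frobenius map `z ↦ z ^ p` is the linear extension of `x ↦ x ^ p`: the trace of the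
regular representation is `|G|` times the coefficient at `1`, and `tr (A ^ p) = tr A ^ p`. So the
two numbers agree modulo `p`; both are less than `p`.

The second equality holds because `η(x)` is a sum of roots of unity, whence `σ (η x) = η (x ^ r)`.
-/

section PowerMap

variable {G : Type*} [Group G] {n : ℕ}

theorem commute_pow_left_iff_of_coprime {x y : G} (hn : n.Coprime (orderOf x)) :
    Commute (x ^ n) y ↔ Commute x y := by
  refine ⟨fun h => ?_, fun h => h.pow_left n⟩
  obtain ⟨k, hk⟩ := exists_pow_eq_self_of_coprime hn
  exact hk ▸ h.pow_left k

theorem pow_mem_iff_of_coprime {S : Subgroup G} {x : G} (hn : n.Coprime (orderOf x)) :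
    x ^ n ∈ S ↔ x ∈ S := by
  refine ⟨fun h => ?_, fun h => pow_mem h n⟩
  obtain ⟨k, hk⟩ := exists_pow_eq_self_of_coprime hn
  exact hk ▸ pow_mem h k

theorem centralizer_pow_of_coprime {x : G} (hn : n.Coprime (orderOf x)) :
    Subgroup.centralizer {x ^ n} = Subgroup.centralizer {x} := by
  ext y
  rw [Subgroup.mem_centralizer_singleton_iff, Subgroup.mem_centralizer_singleton_iff]
  exact Commute.symm_iff.trans ((commute_pow_left_iff_of_coprime hn).trans Commute.symm_iff)

theorem coprime_orderOf_of_coprime_exponent (hn : n.Coprime (Monoid.exponent G)) (x : G) :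
    n.Coprime (orderOf x) :=
  hn.coprime_dvd_right (Monoid.order_dvd_exponent x)

theorem natCard_coprime_of_coprime_exponent [Finite G] (hn : n.Coprime (Monoid.exponent G)) :
    (Nat.card G).Coprime n := by
  refine Nat.Coprime.symm (Nat.coprime_of_dvd fun p hp hpn hpG => ?_)
  have : Fact p.Prime := ⟨hp⟩
  obtain ⟨x, hx⟩ := exists_prime_orderOf_dvd_card' p hpG
  exact Nat.not_coprime_of_dvd_of_dvd hp.one_lt hpn (hx ▸ Monoid.order_dvd_exponent x) hn

theorem exists_prime_gt_forall_pow_eq [Finite G] (hn : n.Coprime (Monoid.exponent G)) (N : ℕ) :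
    ∃ p > N, p.Prime ∧ ∀ x : G, x ^ n = x ^ p := by
  obtain ⟨p, hpN, hp, hpn⟩ := Nat.forall_exists_prime_gt_and_modEq N
    Monoid.exponent_ne_zero_of_finite hn
  refine ⟨p, hpN, hp, fun x => ?_⟩
  exact pow_eq_pow_iff_modEq.2 (hpn.symm.of_dvd (Monoid.order_dvd_exponent x))

end PowerMap

section GroupAlgebra

open MonoidAlgebra

variable {H : Type*} [Group H]

theorem trace_leftMulMatrix_basis {R : Type*} [CommRing R] [Fintype H] (z : MonoidAlgebra R H) :
    (Algebra.leftMulMatrix (MonoidAlgebra.basis H R) z).trace =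
      (Fintype.card H : R) * z.coeff 1 := by
  simp [Matrix.trace, Algebra.leftMulMatrix_eq_repr_mul, MonoidAlgebra.basis]

variable [Finite H] {K : Type*} [Field K] [Fintype K]

theorem coeff_one_pow_card (hH : (Nat.card H).Coprime (Fintype.card K)) (z : MonoidAlgebra K H) :
    (z ^ Fintype.card K).coeff 1 = z.coeff 1 := by
  have := Fintype.ofFinite H
  have hcard : (Fintype.card H : K) ≠ 0 := by
    have := hH.cast (R := K)
    rw [FiniteField.cast_card_eq_zero, isCoprime_zero_right, Nat.card_eq_fintype_card] at this
    exact this.ne_zero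
  have htrace := FiniteField.trace_pow_card (Algebra.leftMulMatrix (MonoidAlgebra.basis H K) z)
  rw [FiniteField.pow_card, ← map_pow, trace_leftMulMatrix_basis, trace_leftMulMatrix_basis]
    at htrace
  exact mul_left_cancel₀ hcard htrace

theorem pow_card_eq_mapDomain_pow (hH : (Nat.card H).Coprime (Fintype.card K))
    {z : MonoidAlgebra K H} (hz : z ∈ Subalgebra.center K (MonoidAlgebra K H)) :
    z ^ Fintype.card K = mapDomain (· ^ Fintype.card K) z := by
  have hpow := hH.pow_left_bijective
  ext y
  obtain ⟨x, rfl⟩ := hpow.surjective y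
  have hcomm : Commute z (single x⁻¹ 1) := (Subalgebra.mem_center_iff.1 hz _).symm
  have hone := coeff_one_pow_card hH (z * single x⁻¹ 1)
  rw [hcomm.mul_pow, single_pow] at hone
  calc (z ^ Fintype.card K).coeff (x ^ Fintype.card K)
      = z.coeff x := by simpa using hone
    _ = (mapDomain (· ^ Fintype.card K) z).coeff (x ^ Fintype.card K) :=
      (Finsupp.mapDomain_apply hpow.injective _ _).symm

end GroupAlgebra

section Roots

open MonoidAlgebra

variable {H : Type*} [Group H] [Fintype H]

/-- The sum of the `m`-th roots of `u`, as an element of the group algebra `R[H]`. -/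
noncomputable def rootSum (R : Type*) [Semiring R] (m : ℕ) (u : H) : MonoidAlgebra R H :=
  ∑ x with x ^ m = u, single x 1

theorem coeff_rootSum (R : Type*) [Semiring R] (m : ℕ) (u x : H) :
    (rootSum R m u).coeff x = if x ^ m = u then 1 else 0 := by
  simp [rootSum, Finsupp.single_apply]

theorem rootSum_mem_center (R : Type*) [CommSemiring R] (m : ℕ) {u : H}
    (hu : u ∈ Subgroup.center H) :
    rootSum R m u ∈ Subalgebra.center R (MonoidAlgebra R H) := by
  rw [Subalgebra.mem_center_iff]
  intro w
  induction w using MonoidAlgebra.induction_on with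
  | add a b ha hb => rw [add_mul, mul_add, ha, hb]
  | smul c a ha => rw [smul_mul_assoc, mul_smul_comm, ha]
  | of h =>
    ext x
    have hroot : (h⁻¹ * x) ^ m = u ↔ (x * h⁻¹) ^ m = u := by
      have hconj : h⁻¹ * x = h⁻¹ * (x * h⁻¹) * h⁻¹⁻¹ := by group
      rw [hconj, conj_pow, mul_inv_eq_iff_eq_mul, ← Subgroup.mem_center_iff.1 hu h⁻¹, mul_right_inj]
    simp [coeff_rootSum, hroot]

theorem mapDomain_pow_rootSum (R : Type*) [Semiring R] (m : ℕ) (u : H) {n : ℕ}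
    (hn : (Nat.card H).Coprime n) :
    mapDomain (· ^ n) (rootSum R m u) = rootSum R m (u ^ n) := by
  have hpow := hn.pow_left_bijective
  ext y
  obtain ⟨x, rfl⟩ := hpow.surjective y
  have hroot : (x ^ n) ^ m = u ^ n ↔ x ^ m = u := by
    rw [pow_right_comm]
    exact hpow.injective.eq_iff
  calc (mapDomain (· ^ n) (rootSum R m u)).coeff (x ^ n)
      = (rootSum R m u).coeff x := Finsupp.mapDomain_apply hpow.injective _ _
    _ = (rootSum R m (u ^ n)).coeff (x ^ n) := by simp only [coeff_rootSum, hroot]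

/-- The number of `x` such that both `x` and its translate `g * x` are `m`-th roots of `u`. -/
noncomputable def rootCount (m : ℕ) (g u : H) : ℕ :=
  Finset.card {x : H | x ^ m = u ∧ (g * x) ^ m = u}

theorem coeff_rootSum_mul_rootSum_inv (R : Type*) [Semiring R] (m : ℕ) (g u : H) :
    (rootSum R m u * rootSum R m u⁻¹).coeff g = rootCount m g u := by
  calc (rootSum R m u * rootSum R m u⁻¹).coeff g
      = ∑ y, (rootSum R m u).coeff (g * y⁻¹) * (rootSum R m u⁻¹).coeff y := by
        rw [coeff_mul_apply_right, Finsupp.sum_fintype _ _ fun _ => mul_zero _]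
    _ = ∑ x, (rootSum R m u).coeff (g * x) * (rootSum R m u⁻¹).coeff x⁻¹ := by
        simpa using (Equiv.sum_comp (Equiv.inv H) fun y =>
          (rootSum R m u).coeff (g * y⁻¹) * (rootSum R m u⁻¹).coeff y).symm
    _ = rootCount m g u := by
        simp [coeff_rootSum, rootCount, ← ite_and, Finset.sum_boole]

theorem rootCount_pow_card_of_mem_center {K : Type*} [Field K] [Fintype K]
    (hH : (Nat.card H).Coprime (Fintype.card K)) (m : ℕ) (g : H) {u : H}
    (hu : u ∈ Subgroup.center H) :
    (rootCount m (g ^ Fintype.card K) (u ^ Fintype.card K) : K) = rootCount m g u := by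
  set q := Fintype.card K
  set a := rootSum K m u
  set b := rootSum K m u⁻¹
  have ha : a ∈ Subalgebra.center K (MonoidAlgebra K H) := rootSum_mem_center K m hu
  have hb : b ∈ Subalgebra.center K (MonoidAlgebra K H) := rootSum_mem_center K m (inv_mem hu)
  have hab : Commute a b := Subalgebra.mem_center_iff.1 hb a
  calc (rootCount m (g ^ q) (u ^ q) : K)
      = (rootSum K m (u ^ q) * rootSum K m (u⁻¹ ^ q)).coeff (g ^ q) := by
        rw [inv_pow, coeff_rootSum_mul_rootSum_inv]
    _ = (mapDomain (· ^ q) (a * b)).coeff (g ^ q) := by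
        rw [← mapDomain_pow_rootSum K m u hH, ← mapDomain_pow_rootSum K m u⁻¹ hH,
          ← pow_card_eq_mapDomain_pow hH ha, ← pow_card_eq_mapDomain_pow hH hb,
          ← pow_card_eq_mapDomain_pow hH (mul_mem ha hb), hab.mul_pow]
    _ = (a * b).coeff g := Finsupp.mapDomain_apply hH.pow_left_bijective.injective _ _
    _ = rootCount m g u := coeff_rootSum_mul_rootSum_inv K m g u

theorem rootCount_pow_of_mem_center {r : ℕ} (hr : r.Coprime (Monoid.exponent H)) (m : ℕ) (g : H)
    {u : H} (hu : u ∈ Subgroup.center H) :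
    rootCount m (g ^ r) (u ^ r) = rootCount m g u := by
  obtain ⟨p, hpH, hp, hpow⟩ := exists_prime_gt_forall_pow_eq hr (Fintype.card H)
  have : Fact p.Prime := ⟨hp⟩
  have hcop : (Nat.card H).Coprime (Fintype.card (ZMod p)) := by
    rw [Nat.card_eq_fintype_card, ZMod.card]
    exact (Nat.coprime_of_lt_prime Fintype.card_ne_zero hpH hp).symm
  have hmod := rootCount_pow_card_of_mem_center hcop m g hu
  rw [ZMod.card, ZMod.natCast_eq_natCast_iff] at hmod
  have hlt (a b : H) : rootCount m a b < p := (Finset.card_le_univ _).trans_lt hpH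
  rw [hpow, hpow]
  exact hmod.eq_of_lt_of_lt (hlt _ _) (hlt _ _)

theorem rootCount_coe_subgroup (m : ℕ) {S : Subgroup H} (g u : S)
    (hS : Subgroup.centralizer {(u : H)} ≤ S) :
    rootCount m (g : H) (u : H) = rootCount m g u := by
  symm
  refine Finset.card_bij (fun x _ => (x : H)) ?_ (fun _ _ _ _ h => Subtype.ext h) ?_
  · simp [Subtype.ext_iff]
  · intro x hx
    rw [Finset.mem_filter_univ] at hx
    have hxu : Commute x u := hx.1 ▸ Commute.self_pow x m
    exact ⟨⟨x, hS (Subgroup.mem_centralizer_singleton_iff.2 hxu.eq)⟩,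
      by simpa [Subtype.ext_iff] using hx, rfl⟩

theorem rootCount_eq_zero_of_not_commute (m : ℕ) {g u : H} (h : ¬ Commute g u) :
    rootCount m g u = 0 := by
  rw [rootCount, Finset.card_filter_eq_zero_iff]
  rintro x - ⟨hx, hgx⟩
  have hxu : Commute x u := hx ▸ Commute.self_pow x m
  have hgxu : Commute (g * x) u := hgx ▸ Commute.self_pow (g * x) m
  exact h (by simpa using hgxu.mul_left hxu.inv_left)

theorem rootCount_pow {r : ℕ} (hr : r.Coprime (Monoid.exponent H)) (m : ℕ) (g u : H) :
    rootCount m (g ^ r) (u ^ r) = rootCount m g u := by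
  have hg := coprime_orderOf_of_coprime_exponent hr g
  have hu := coprime_orderOf_of_coprime_exponent hr u
  by_cases hgu : Commute g u
  · let C := Subgroup.centralizer {u}
    let g' : C := ⟨g, Subgroup.mem_centralizer_singleton_iff.2 hgu.eq⟩
    let u' : C := ⟨u, Subgroup.mem_centralizer_singleton_iff.2 rfl⟩
    have hcenter : u' ∈ Subgroup.center C := Subgroup.mem_center_iff.2 fun x =>
      Subtype.ext (Subgroup.mem_centralizer_singleton_iff.1 x.2)
    have hrC : r.Coprime (Monoid.exponent C) :=
      hr.coprime_dvd_right (Monoid.exponent_submonoid_dvd C.toSubmonoid)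
    calc rootCount m (g ^ r) (u ^ r)
        = rootCount m (g' ^ r) (u' ^ r) :=
          rootCount_coe_subgroup m (g' ^ r) (u' ^ r) (centralizer_pow_of_coprime hu).le
      _ = rootCount m g' u' := rootCount_pow_of_mem_center hrC m g' hcenter
      _ = rootCount m g u := (rootCount_coe_subgroup m g' u' le_rfl).symm
  · have hgu' : ¬ Commute (g ^ r) (u ^ r) := by
      rwa [commute_pow_left_iff_of_coprime hg, Commute.symm_iff,
        commute_pow_left_iff_of_coprime hu, Commute.symm_iff]
    rw [rootCount_eq_zero_of_not_commute m hgu, rootCount_eq_zero_of_not_commute m hgu']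

theorem sum_ite_pow_eq_sum_rootCount_smul {M : Type*} [AddCommMonoid M] (m : ℕ) (g : H)
    (f : H → M) :
    ∑ x, (if x ^ m = (g * x) ^ m then f (x ^ m) else 0) = ∑ u, rootCount m g u • f u := by
  simp only [rootCount, Finset.card_filter, Finset.sum_smul]
  rw [Finset.sum_comm]
  refine Finset.sum_congr rfl fun x _ => ?_
  simp [ite_and, eq_comm]

theorem sum_ite_pow_eq_pow_mul_pow {M : Type*} [AddCommMonoid M] {r : ℕ}
    (hr : r.Coprime (Monoid.exponent H)) (m : ℕ) (g : H) (f : H → M) :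
    ∑ x, (if x ^ m = (g ^ r * x) ^ m then f (x ^ m) else 0) =
      ∑ x, (if x ^ m = (g * x) ^ m then f ((x ^ m) ^ r) else 0) := by
  calc ∑ x, (if x ^ m = (g ^ r * x) ^ m then f (x ^ m) else 0)
      = ∑ u, rootCount m (g ^ r) u • f u := sum_ite_pow_eq_sum_rootCount_smul m (g ^ r) f
    _ = ∑ u, rootCount m (g ^ r) (u ^ r) • f (u ^ r) :=
      ((natCard_coprime_of_coprime_exponent hr).pow_left_bijective.sum_comp _).symm
    _ = ∑ u, rootCount m g u • f (u ^ r) := by simp only [rootCount_pow hr]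
    _ = ∑ x, (if x ^ m = (g * x) ^ m then f ((x ^ m) ^ r) else 0) :=
      (sum_ite_pow_eq_sum_rootCount_smul m g fun u => f (u ^ r)).symm

end Roots

section Indicator

variable {G K : Type*} [Group G] [Fintype G] [Field K]

/-- The higher Frobenius-Schur indicator `ν_m(g, f) = |C_G(g)|⁻¹ ∑ f(x ^ m)`, the sum running over
the `x` with `x ^ m = (g x) ^ m`. Such `x ^ m` lie in `C_G(g)`, so only the values of `f` there
matter; taking `f` to be defined on all of `G` lets `g` and `g ^ r` share the same `f`. -/
noncomputable def frobeniusSchurIndicator (m : ℕ) (g : G) (f : G → K) : K :=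
  1 / (Nat.card (Subgroup.centralizer {g}) : K) *
    ∑ x, if x ^ m = (g * x) ^ m then f (x ^ m) else 0

theorem frobeniusSchurIndicator_pow {r : ℕ} (hr : r.Coprime (Monoid.exponent G)) (m : ℕ) (g : G)
    (f : G → K) :
    frobeniusSchurIndicator m (g ^ r) f = frobeniusSchurIndicator m g fun x => f (x ^ r) := by
  rw [frobeniusSchurIndicator, frobeniusSchurIndicator, sum_ite_pow_eq_pow_mul_pow hr,
    centralizer_pow_of_coprime (coprime_orderOf_of_coprime_exponent hr g)]

theorem map_frobeniusSchurIndicator {L : Type*} [Field L] (σ : K →+* L) (m : ℕ) (g : G)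
    (f : G → K) :
    σ (frobeniusSchurIndicator m g f) = frobeniusSchurIndicator m g fun x => σ (f x) := by
  simp only [frobeniusSchurIndicator, map_mul, map_div₀, map_one, map_natCast, map_sum,
    apply_ite σ, map_zero]

end Indicator

section Trace

open Module

theorem trace_pow_of_isNilpotent_sub_algebraMap {R M : Type*} [CommRing R] [IsReduced R]
    [AddCommGroup M] [Module R M] [Module.Free R M] [Module.Finite R M] (f : End R M)
    (μ : R) (hf : IsNilpotent (f - algebraMap R (End R M) μ)) (k : ℕ) :
    LinearMap.trace R M (f ^ k) = μ ^ k * finrank R M := by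
  induction k with
  | zero => simp
  | succ k ih =>
    rw [pow_succ, End.mul_eq_comp, LinearMap.trace_comp_eq_mul_of_commute_of_isNilpotent μ
      (Commute.pow_self f k) hf, ih, pow_succ', mul_assoc]

variable {K V : Type*} [Field K] [IsAlgClosed K] [AddCommGroup V] [Module K V]
  [FiniteDimensional K V]

theorem isInternal_maxGenEigenspace_eigenvalues (f : End K V) :
    DirectSum.IsInternal fun μ : f.Eigenvalues => f.maxGenEigenspace μ := by
  have hne (μ : K) : f.HasUnifEigenvalue μ 1 ↔ f.maxGenEigenspace μ ≠ ⊥ :=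
    (End.hasUnifEigenvalue_iff_hasUnifEigenvalue_one ENat.top_pos).symm
  refine DirectSum.isInternal_submodule_of_iSupIndep_of_iSup_eq_top
    (f.independent_maxGenEigenspace.comp Subtype.val_injective) ?_
  rw [← End.iSup_maxGenEigenspace_eq_top f, ← iSup_ne_bot_subtype f.maxGenEigenspace]
  exact (Equiv.subtypeEquivRight hne).iSup_congr fun _ => rfl

theorem trace_pow_eq_sum_eigenvalues (f : End K V) (k : ℕ) :
    LinearMap.trace K V (f ^ k) =
      ∑ μ : f.Eigenvalues, (μ : K) ^ k * finrank K (f.maxGenEigenspace μ) := by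
  have hmapsPow (μ : K) := f.mapsTo_maxGenEigenspace_of_comm (Commute.self_pow f k) μ
  have hmaps (μ : K) := f.mapsTo_maxGenEigenspace_of_comm (Commute.refl f) μ
  rw [LinearMap.trace_eq_sum_trace_restrict (isInternal_maxGenEigenspace_eigenvalues f)
    fun μ => hmapsPow μ]
  refine Finset.sum_congr rfl fun μ _ => ?_
  rw [← End.pow_restrict k (hmaps μ)]
  exact trace_pow_of_isNilpotent_sub_algebraMap _ _
    (f.isNilpotent_restrict_maxGenEigenspace_sub_algebraMap μ) k

theorem map_trace_eq_trace_pow (f : End K V) (σ : K →+* K) (r : ℕ)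
    (hσ : ∀ μ, f.HasEigenvalue μ → σ μ = μ ^ r) :
    σ (LinearMap.trace K V f) = LinearMap.trace K V (f ^ r) := by
  have htrace := trace_pow_eq_sum_eigenvalues f 1
  rw [pow_one] at htrace
  simp only [htrace, trace_pow_eq_sum_eigenvalues f r, map_sum, map_mul, map_natCast, pow_one]
  exact Finset.sum_congr rfl fun μ _ => by rw [hσ μ μ.2]

end Trace

section Character

variable {G K : Type*} [Group G] [Field K]

theorem map_character_eq_character_pow [IsAlgClosed K] (V : FDRep K G) {n : ℕ} {x : G}
    (hx : x ^ n = 1) (σ : K →+* K) (r : ℕ) (hσ : ∀ ζ : K, ζ ^ n = 1 → σ ζ = ζ ^ r) :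
    σ (V.character x) = V.character (x ^ r) := by
  rw [FDRep.character, FDRep.character, map_pow]
  refine map_trace_eq_trace_pow _ σ r fun μ hμ => hσ μ ?_
  have hone := hμ.pow n
  rw [← map_pow, hx, map_one] at hone
  obtain ⟨v, hv⟩ := hone.exists_hasEigenvector
  exact smul_left_injective K hv.2 (by simpa using hv.apply_eq_smul.symm)

/-- The character of a representation of a subgroup, extended by zero to the whole group. -/
noncomputable def extendedCharacter {S : Subgroup G} (V : FDRep K S) : G → K := fun x =>
  if h : x ∈ S then V.character ⟨x, h⟩ else 0

theorem map_extendedCharacter [IsAlgClosed K] {S : Subgroup G} (V : FDRep K S) {r : ℕ}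
    (hr : r.Coprime (Monoid.exponent G)) (σ : K →+* K)
    (hσ : ∀ ζ : K, ζ ^ Monoid.exponent G = 1 → σ ζ = ζ ^ r) (x : G) :
    σ (extendedCharacter V x) = extendedCharacter V (x ^ r) := by
  have hmem : x ^ r ∈ S ↔ x ∈ S :=
    pow_mem_iff_of_coprime (coprime_orderOf_of_coprime_exponent hr x)
  by_cases hx : x ∈ S
  · have hpow : (⟨x, hx⟩ : S) ^ Monoid.exponent G = 1 :=
      Subtype.ext (Monoid.pow_exponent_eq_one x)
    rw [extendedCharacter, extendedCharacter, dif_pos hx, dif_pos (hmem.2 hx)]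
    exact map_character_eq_character_pow V hpow σ r hσ
  · rw [extendedCharacter, extendedCharacter, dif_neg hx, dif_neg (mt hmem.1 hx), map_zero]

end Character

theorem stmt15_general {G K : Type*} [Group G] [Fintype G] [Field K] [IsAlgClosed K]
    (g : G) [NeZero (Nat.card (Subgroup.centralizer {g}) : K)] (m : ℕ) {r : ℕ}
    (hr : r.Coprime (Monoid.exponent G)) (V : FDRep K (Subgroup.centralizer {g})) (σ : K →+* K)
    (hσ : ∀ ζ : K, ζ ^ Monoid.exponent G = 1 → σ ζ = ζ ^ r) :
    frobeniusSchurIndicator m (g ^ r) (extendedCharacter V) =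
        frobeniusSchurIndicator m g (fun x => extendedCharacter V (x ^ r)) ∧
      frobeniusSchurIndicator m (g ^ r) (extendedCharacter V) =
        σ (frobeniusSchurIndicator m g (extendedCharacter V)) := by
  have hpow := frobeniusSchurIndicator_pow hr m g (extendedCharacter V)
  refine ⟨hpow, ?_⟩
  simp only [hpow, map_frobeniusSchurIndicator, map_extendedCharacter V hr σ hσ]

/-- ν_m(g^r, η) = ν_m(g, ψ^r η) = σ_r(ν_m(g, η)) for r coprime to exp(G), where
ν_m(g,η) = (1/|C_G(g)|) Σ_{x^m=(gx)^m} η(x^m), ψ^r is the Adams operator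
(ψ^r η)(x) = η(x^r), and σ_r is any field embedding ℂ → ℂ sending each exp(G)-th
root of unity to its r-th power (so it restricts to the Galois automorphism
ζ ↦ ζ^r of ℚ(ζ_{exp G})).  Note C_G(g^r) = C_G(g); the character η of C_G(g) is
extended by 0 outside the centralizer. -/
theorem stmt15 {G : Type} [Group G] [Fintype G] (g : G) (m : ℕ) (hm : 0 < m)
    (r : ℕ) (hr : r.Coprime (Monoid.exponent G))
    (V : FDRep ℂ ↥(Subgroup.centralizer ({g} : Set G))) (hV : Simple V)
    (σ : ℂ →+* ℂ) (hσ : ∀ ζ : ℂ, ζ ^ Monoid.exponent G = 1 → σ ζ = ζ ^ r) :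
    (let η : G → ℂ := fun x =>
      if h : x ∈ Subgroup.centralizer ({g} : Set G) then V.character ⟨x, h⟩ else 0;
    (1 / (Nat.card (Subgroup.centralizer ({g ^ r} : Set G)) : ℂ)) *
        ∑ x : G, (if x ^ m = (g ^ r * x) ^ m then η (x ^ m) else 0) =
      (1 / (Nat.card (Subgroup.centralizer ({g} : Set G)) : ℂ)) *
        ∑ x : G, (if x ^ m = (g * x) ^ m then η ((x ^ m) ^ r) else 0) ∧
    (1 / (Nat.card (Subgroup.centralizer ({g ^ r} : Set G)) : ℂ)) *
        ∑ x : G, (if x ^ m = (g ^ r * x) ^ m then η (x ^ m) else 0) =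
      σ ((1 / (Nat.card (Subgroup.centralizer ({g} : Set G)) : ℂ)) *
        ∑ x : G, (if x ^ m = (g * x) ^ m then η (x ^ m) else 0))) :=
  stmt15_general g m hr V σ hσ
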